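/- Fix λ > 0 and set p_n = λ/n. Let (k_n)_{n∈ℕ} be a sequence of positive reals such that lim_{n→∞} (log n)/k_n^{1/3} = 0 and lim_{n→∞} k_n/n³ = 0. Then lim_{n→∞} log P(T ≥ k_n) / (k_n^{2/3} · log(1/p_n)) = −6^{2/3}/2. -/

import Mathlib

open scoped BigOperators Classical
open Finset Filter

noncomputable section

/-- Number of edges of a finite simple graph. -/
def edgeCount {V : Type*} [Fintype V] (G : SimpleGraph V) : ℕ :=
  (Finset.univ.filter (fun e : Sym2 V => e ∈ G.edgeSet)).card

/-- Number of triangles (3-cliques) of a finite simple graph. -/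
def triangleCount {V : Type*} [Fintype V] (G : SimpleGraph V) : ℕ :=
  (Finset.univ.filter (fun s : Finset V => G.IsNClique 3 s)).card

/-- Number of vertices lying in at least one triangle. -/
def vT {V : Type*} [Fintype V] (G : SimpleGraph V) : ℕ :=
  (Finset.univ.filter (fun v : V => ∃ u w : V, G.Adj v u ∧ G.Adj v w ∧ G.Adj u w)).card

/-- Degree of a vertex. -/
def deg {V : Type*} [Fintype V] (G : SimpleGraph V) (v : V) : ℕ :=
  (Finset.univ.filter (fun u => G.Adj v u)).card

/-- Probability that the Erdős–Rényi random graph `G_{n,p}` equals the graph `G`. -/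
def graphProb (n : ℕ) (p : ℝ) (G : SimpleGraph (Fin n)) : ℝ :=
  p ^ edgeCount G * (1 - p) ^ (n.choose 2 - edgeCount G)

/-- Probability of an event under the Erdős–Rényi measure. -/
def prob (n : ℕ) (p : ℝ) (A : Set (SimpleGraph (Fin n))) : ℝ :=
  ∑ G : SimpleGraph (Fin n), if G ∈ A then graphProb n p G else 0

/-- Conditional probability `P(A | B)` (with the convention `0` when `P(B) = 0`). -/
def condProb (n : ℕ) (p : ℝ) (A B : Set (SimpleGraph (Fin n))) : ℝ :=
  prob n p (A ∩ B) / prob n p B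

/-- Conditional expectation `E_G[f]` given that every edge of `G` is present. -/
def condExpect (n : ℕ) (p : ℝ) (G : SimpleGraph (Fin n)) (f : SimpleGraph (Fin n) → ℝ) : ℝ :=
  (∑ H : SimpleGraph (Fin n), if G ≤ H then graphProb n p H * f H else 0) /
    prob n p {H | G ≤ H}

/-- `E_G(T)`: conditional expectation of the number of triangles. -/
def condTri (n : ℕ) (p : ℝ) (G : SimpleGraph (Fin n)) : ℝ :=
  condExpect n p G (fun H => (triangleCount H : ℝ))

/-- The variational quantity `Φ_{n,p,k}(a)`. -/
def Phi (n : ℕ) (p k a : ℝ) : ℝ :=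
  sInf {x : ℝ | ∃ G : SimpleGraph (Fin n),
    a * k ≤ condTri n p G ∧ x = (edgeCount G : ℝ) * Real.log (1 / p)}

/-- A seed, with parameters `a, w, C, k` and edge probability `p`. -/
def IsSeed (n : ℕ) (p a w C k : ℝ) (G : SimpleGraph (Fin n)) : Prop :=
  (a - w) * k ≤ condTri n p G ∧
  (edgeCount G : ℝ) ≤ C * a * w⁻¹ * k ^ ((2 : ℝ) / 3) * Real.log (1 / p)

/-- A core, with parameters `a, w, C, k` and edge probability `p`. -/
def IsCore (n : ℕ) (p a w C k : ℝ) (G : SimpleGraph (Fin n)) : Prop :=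
  (a - 2 * w) * k ≤ condTri n p G ∧
  (edgeCount G : ℝ) ≤ C * a * w⁻¹ * k ^ ((2 : ℝ) / 3) * Real.log (1 / p) ∧
  ∀ e ∈ G.edgeSet,
    w ^ 2 * k ^ ((1 : ℝ) / 3) / (C * a * Real.log (1 / p)) ≤
      condTri n p G - condTri n p (G.deleteEdges {e})

/-- A `q`-basic graph. -/
def qBasic {V : Type*} [Fintype V] (q : ℕ) (G : SimpleGraph V) : Prop :=
  vT G = q ∧ ∀ e ∈ G.edgeSet, vT (G.deleteEdges {e}) < q

/-- Containment of a `(δ, m)`-near-clique. -/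
def containsNearClique {n : ℕ} (H : SimpleGraph (Fin n)) (δ m : ℝ) : Prop :=
  ∃ H' : SimpleGraph (Fin n), H' ≤ H ∧ 0 < edgeCount H' ∧
    ∀ v : Fin n, (∃ u, H'.Adj v u) →
      (1 - 4 * δ ^ ((1 : ℝ) / 2)) * (2 * m) ^ ((1 : ℝ) / 2) ≤ (deg H' v : ℝ)

/-- Partition function of the exponential random graph model tilted by `exp(b · V_T)`. -/
def ergmZ (n : ℕ) (p b : ℝ) : ℝ :=
  ∑ G : SimpleGraph (Fin n), graphProb n p G * Real.exp (b * vT G)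

/-- Probability of an event under the exponential random graph measure. -/
def ergmProb (n : ℕ) (p b : ℝ) (A : Set (SimpleGraph (Fin n))) : ℝ :=
  (∑ G : SimpleGraph (Fin n),
    if G ∈ A then graphProb n p G * Real.exp (b * vT G) else 0) / ergmZ n p b

/-!
For the lower bound, plant a clique on about `(6 k) ^ (1 / 3)` vertices.

For the upper bound, call a subgraph of `G` with `O(k ^ (2 / 3) * log (1 / p))` edges and at least
`(1 - η) * k` triangles a *seed*. When `G` has no seed, expose a tuple of triangles one triangle at
a time: the edges seen so far span fewer than `(1 - η) * k` triangles, so the moment of order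
`r ≈ k ^ (2 / 3) * log (1 / p)` of `T` is at most `((1 - η + o(1)) * k) ^ r`, and Markov's
inequality makes `k ≤ T` negligible. A seed can be pruned to a *core*, losing at most `η * k`
triangles, where every non-isolated vertex has degree at least a multiple of
`k ^ (1 / 3) / log (1 / p)`. A core with `e` edges therefore has few vertices, there are only
`(1 / p) ^ (o(1) * e)` such cores, and each of them lies in `G` with probability `p ^ e`. Finally
`6 * T ≤ (2 * e) ^ (3 / 2)` in any graph with `e` edges, which forces
`e ≥ (1 - o(1)) * (6 * k) ^ (2 / 3) / 2` for a core.
-/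

section Graphs

variable {V : Type*} [Fintype V]

lemma edgeCount_eq_card_edgeFinset (G : SimpleGraph V) : edgeCount G = #G.edgeFinset := by
  simp only [edgeCount, SimpleGraph.edgeFinset, Set.filter_mem_univ_eq_toFinset]

lemma edgeCount_mono {F G : SimpleGraph V} (h : F ≤ G) : edgeCount F ≤ edgeCount G := by
  simpa only [edgeCount_eq_card_edgeFinset] using
    card_le_card (SimpleGraph.edgeFinset_subset_edgeFinset.2 h)

lemma edgeCount_strictMono {F G : SimpleGraph V} (h : F < G) : edgeCount F < edgeCount G := by
  simpa only [edgeCount_eq_card_edgeFinset] using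
    card_lt_card (SimpleGraph.edgeFinset_ssubset_edgeFinset.2 h)

lemma edgeCount_bot : edgeCount (⊥ : SimpleGraph V) = 0 := by
  simp [edgeCount]

lemma edgeCount_sup_add_edgeCount_inf (F G : SimpleGraph V) :
    edgeCount (F ⊔ G) + edgeCount (F ⊓ G) = edgeCount F + edgeCount G := by
  simp only [edgeCount_eq_card_edgeFinset, SimpleGraph.edgeFinset_sup, SimpleGraph.edgeFinset_inf]
  exact card_union_add_card_inter _ _

lemma edgeCount_sdiff_add_edgeCount {F G : SimpleGraph V} (h : F ≤ G) :
    edgeCount (G \ F) + edgeCount F = edgeCount G := by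
  simpa [edgeCount_bot, sdiff_sup_cancel h] using
    (edgeCount_sup_add_edgeCount_inf (G \ F) F).symm

lemma edgeCount_top : edgeCount (⊤ : SimpleGraph V) = (Fintype.card V).choose 2 := by
  rw [edgeCount_eq_card_edgeFinset]
  convert SimpleGraph.card_edgeFinset_top_eq_card_choose_two (V := V)

lemma edgeCount_deleteEdges_singleton_add_one {G : SimpleGraph V} {e : Sym2 V}
    (he : e ∈ G.edgeSet) : edgeCount (G.deleteEdges {e}) + 1 = edgeCount G := by
  have : edgeCount (G.deleteEdges {e}) = #(G.edgeFinset.erase e) := by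
    rw [edgeCount]
    congr 1
    ext f
    simp [and_comm]
  rw [this, edgeCount_eq_card_edgeFinset,
    card_erase_add_one (SimpleGraph.mem_edgeFinset.2 he)]

lemma deg_eq_degree (G : SimpleGraph V) (v : V) : deg G v = G.degree v := by
  rw [deg, ← SimpleGraph.card_neighborFinset_eq_degree, SimpleGraph.neighborFinset_eq_filter]

lemma sum_deg (G : SimpleGraph V) : ∑ v, deg G v = 2 * edgeCount G := by
  simp only [deg_eq_degree, edgeCount_eq_card_edgeFinset, G.sum_degrees_eq_twice_card_edges]

lemma sum_support_deg (G : SimpleGraph V) :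
    ∑ v ∈ G.support.toFinset, deg G v = 2 * edgeCount G := by
  simp only [deg_eq_degree, edgeCount_eq_card_edgeFinset,
    ← SimpleGraph.sum_degrees_support_eq_twice_card_edges]

end Graphs

section Triangles

lemma exists_eq_triple {α : Type*} {s : Finset α} (hs : #s = 3) {u v : α} (hu : u ∈ s)
    (hv : v ∈ s) (huv : u ≠ v) : ∃ w, w ≠ u ∧ w ≠ v ∧ s = {w, u, v} := by
  obtain ⟨w, hw, rfl⟩ := (Finset.exists_eq_insert_iff (s := {u, v}) (t := s)).2
    ⟨by simp [insert_subset_iff, hu, hv], by rw [card_pair huv, hs]⟩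
  simp only [mem_insert, mem_singleton, not_or] at hw
  exact ⟨w, hw.1, hw.2, rfl⟩

variable {V : Type*}

/-- The graph on `V` whose edges are exactly the pairs of distinct vertices of `t`. -/
def cliqueOn (t : Finset V) : SimpleGraph V :=
  (⊤ : SimpleGraph t).map (Function.Embedding.subtype (· ∈ t))

lemma cliqueOn_le_iff {t : Finset V} {G : SimpleGraph V} :
    cliqueOn t ≤ G ↔ G.IsClique (t : Set V) := by
  rw [cliqueOn, SimpleGraph.map_le_iff_le_comap, top_le_iff, ← SimpleGraph.induce_eq_top]
  rfl

lemma cliqueOn_adj {t : Finset V} {u v : V} : (cliqueOn t).Adj u v ↔ u ∈ t ∧ v ∈ t ∧ u ≠ v := by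
  simp only [cliqueOn, SimpleGraph.map_adj, SimpleGraph.top_adj]
  constructor
  · rintro ⟨x, y, hxy, rfl, rfl⟩
    exact ⟨x.2, y.2, Subtype.coe_ne_coe.2 hxy⟩
  · rintro ⟨hu, hv, huv⟩
    exact ⟨⟨u, hu⟩, ⟨v, hv⟩, by simpa using huv, rfl, rfl⟩

variable [Fintype V]

lemma le_cliqueOn_support (G : SimpleGraph V) : G ≤ cliqueOn G.support.toFinset :=
  fun u v huv ↦ cliqueOn_adj.2
    ⟨Set.mem_toFinset.2 ⟨v, huv⟩, Set.mem_toFinset.2 ⟨u, huv.symm⟩, huv.ne⟩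

lemma edgeCount_cliqueOn (t : Finset V) : edgeCount (cliqueOn t) = (#t).choose 2 := by
  rw [edgeCount_eq_card_edgeFinset, cliqueOn]
  have := edgeCount_top (V := t)
  rw [edgeCount_eq_card_edgeFinset, Fintype.card_coe,
    ← SimpleGraph.card_edgeFinset_map (Function.Embedding.subtype (· ∈ t))] at this
  convert this

lemma triangleCount_eq_card_cliqueFinset (G : SimpleGraph V) :
    triangleCount G = #(G.cliqueFinset 3) := by
  rw [triangleCount, SimpleGraph.cliqueFinset]

lemma triangleCount_eq_card_cliqueOn_le (G : SimpleGraph V) :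
    triangleCount G = #{t ∈ (univ : Finset V).powersetCard 3 | cliqueOn t ≤ G} := by
  unfold triangleCount
  congr 1
  ext t
  simp [SimpleGraph.isNClique_iff, cliqueOn_le_iff, and_comm]

lemma choose_three_le_triangleCount {G : SimpleGraph V} {t : Finset V} (h : cliqueOn t ≤ G) :
    (#t).choose 3 ≤ triangleCount G := by
  rw [triangleCount_eq_card_cliqueFinset, ← card_powersetCard]
  refine card_le_card fun s hs ↦ ?_
  rw [mem_powersetCard] at hs
  rw [SimpleGraph.mem_cliqueFinset_iff]
  exact ⟨(cliqueOn_le_iff.1 h).subset (mod_cast hs.1), hs.2⟩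

lemma card_triples_sharing_edge_le (F : SimpleGraph V) :
    #{t ∈ (univ : Finset V).powersetCard 3 | F ⊓ cliqueOn t ≠ ⊥}
      ≤ Fintype.card V * edgeCount F := by
  rw [edgeCount_eq_card_edgeFinset, ← card_univ, ← card_product]
  refine card_le_card_of_surjOn (fun x ↦ insert x.1 x.2.toFinset) fun t ht ↦ ?_
  simp only [coe_filter, mem_powersetCard_univ, Set.mem_ofPred_eq,
    SimpleGraph.ne_bot_iff_exists_adj] at ht
  obtain ⟨ht, u, v, hF, huv⟩ := ht
  obtain ⟨hu, hv, -⟩ := cliqueOn_adj.1 huv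
  obtain ⟨w, -, -, rfl⟩ := exists_eq_triple ht hu hv hF.ne
  exact ⟨(w, s(u, v)), by simpa using hF, by simp [Sym2.toFinset_mk_eq]⟩

lemma card_triangles_through_edge_le_deg (G : SimpleGraph V) {u v : V} (huv : u ≠ v) :
    #{s ∈ G.cliqueFinset 3 | u ∈ s ∧ v ∈ s} ≤ deg G u := by
  refine card_le_card_of_surjOn (fun w ↦ {w, u, v}) fun s hs ↦ ?_
  simp only [coe_filter, Set.mem_ofPred_eq, SimpleGraph.mem_cliqueFinset_iff] at hs
  obtain ⟨hs, hu, hv⟩ := hs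
  obtain ⟨w, hwu, -, rfl⟩ := exists_eq_triple hs.card_eq hu hv huv
  exact ⟨w, by simpa using hs.isClique hu (by simp) hwu.symm, rfl⟩

lemma triangleCount_le_triangleCount_deleteEdges_add_deg {G : SimpleGraph V} {u v : V}
    (huv : u ≠ v) :
    triangleCount G ≤ triangleCount (G.deleteEdges {s(u, v)}) + deg G u := by
  generalize hH : G.deleteEdges {s(u, v)} = H
  have hsub : {t ∈ G.cliqueFinset 3 | ¬(u ∈ t ∧ v ∈ t)} ⊆ H.cliqueFinset 3 := by
    intro t ht
    simp only [mem_filter, SimpleGraph.mem_cliqueFinset_iff] at ht ⊢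
    refine ⟨fun x hx y hy hxy ↦ ?_, ht.1.card_eq⟩
    rw [← hH, SimpleGraph.deleteEdges_adj]
    refine ⟨ht.1.isClique hx hy hxy, fun he ↦ ht.2 ?_⟩
    rw [Set.mem_singleton_iff, Sym2.eq_iff] at he
    rcases he with ⟨rfl, rfl⟩ | ⟨rfl, rfl⟩
    exacts [⟨hx, hy⟩, ⟨hy, hx⟩]
  rw [triangleCount_eq_card_cliqueFinset, triangleCount_eq_card_cliqueFinset,
    ← card_filter_add_card_filter_not (s := G.cliqueFinset 3) (fun t ↦ u ∈ t ∧ v ∈ t), add_comm]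
  exact add_le_add (card_le_card hsub) (card_triangles_through_edge_le_deg G huv)

lemma sum_card_triangles_through_vertex (G : SimpleGraph V) :
    ∑ v, #{s ∈ G.cliqueFinset 3 | v ∈ s} = 3 * triangleCount G := by
  have := sum_card_bipartiteAbove_eq_sum_card_bipartiteBelow (s := univ) (t := G.cliqueFinset 3)
    (fun (v : V) s ↦ v ∈ s)
  simp only [bipartiteAbove, bipartiteBelow, filter_univ_mem] at this
  rw [this, sum_congr rfl fun s hs ↦ (G.mem_cliqueFinset_iff.1 hs).card_eq, sum_const,
    triangleCount_eq_card_cliqueFinset, smul_eq_mul, mul_comm]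

lemma card_triangles_through_vertex_le {G : SimpleGraph V} {v : V} {A : Finset (Finset V)}
    (h : ∀ x y, G.Adj v x → G.Adj v y → G.Adj x y → {x, y} ∈ A) :
    #{s ∈ G.cliqueFinset 3 | v ∈ s} ≤ #A := by
  refine card_le_card_of_injOn (·.erase v) (fun s hs ↦ ?_) fun s hs t ht hst ↦ ?_
  · simp only [coe_filter, Set.mem_ofPred_eq, SimpleGraph.mem_cliqueFinset_iff] at hs
    obtain ⟨x, y, hxy, hs'⟩ := card_eq_two.1 (show #(s.erase v) = 2 by
      rw [card_erase_of_mem hs.2, hs.1.card_eq])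
    have hx := mem_erase.1 (hs' ▸ mem_insert_self x {y} : x ∈ s.erase v)
    have hy := mem_erase.1 (hs' ▸ by simp : y ∈ s.erase v)
    simpa only [hs', mem_coe] using h x y (hs.1.isClique hs.2 hx.2 hx.1.symm)
      (hs.1.isClique hs.2 hy.2 hy.1.symm) (hs.1.isClique hx.2 hy.2 hxy)
  · simp only [coe_filter, Set.mem_ofPred_eq] at hs ht
    exact erase_injOn' v hs.2 ht.2 hst

lemma card_triangles_through_vertex_le_edgeCount (G : SimpleGraph V) (v : V) :
    #{s ∈ G.cliqueFinset 3 | v ∈ s} ≤ edgeCount G := by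
  rw [edgeCount_eq_card_edgeFinset]
  refine (card_triangles_through_vertex_le (A := G.edgeFinset.image Sym2.toFinset)
    fun x y _ _ hxy ↦ ?_).trans card_image_le
  exact mem_image.2 ⟨s(x, y), SimpleGraph.mem_edgeFinset.2 hxy, by simp [Sym2.toFinset_mk_eq]⟩

lemma two_mul_card_triangles_through_vertex_le_sq_deg (G : SimpleGraph V) (v : V) :
    2 * #{s ∈ G.cliqueFinset 3 | v ∈ s} ≤ deg G v ^ 2 := by
  have h : #{s ∈ G.cliqueFinset 3 | v ∈ s} ≤ (deg G v).choose 2 := by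
    rw [deg, ← card_powersetCard]
    refine card_triangles_through_vertex_le fun x y hx hy hxy ↦ ?_
    rw [mem_powersetCard, card_pair hxy.ne]
    exact ⟨by simp [insert_subset_iff, hx, hy], rfl⟩
  calc 2 * #{s ∈ G.cliqueFinset 3 | v ∈ s} ≤ (deg G v).choose 2 * 2 := by lia
    _ = deg G v * (deg G v - 1) := Nat.choose_two_right _ ▸
      Nat.div_mul_cancel (Nat.even_mul_pred_self _).two_dvd
    _ ≤ deg G v ^ 2 := by rw [sq]; gcongr; exact Nat.sub_le _ _

/-- Each vertex `v` lies in at most `min (deg v ^ 2 / 2) e ≤ deg v * √(2 e) / 2` triangles. -/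
lemma six_mul_triangleCount_le (G : SimpleGraph V) :
    6 * (triangleCount G : ℝ) ≤ (2 * edgeCount G : ℝ) ^ (3 / 2 : ℝ) := by
  let T (v : V) : ℕ := #{s ∈ G.cliqueFinset 3 | v ∈ s}
  have hvertex (v : V) : 2 * (T v : ℝ) ≤ deg G v * √(2 * edgeCount G) := by
    refine abs_le_of_sq_le_sq' ?_ (by positivity) |>.2
    have hdeg : 2 * (T v : ℝ) ≤ (deg G v : ℝ) ^ 2 := by
      exact_mod_cast two_mul_card_triangles_through_vertex_le_sq_deg G v
    have hedge : 2 * (T v : ℝ) ≤ 2 * edgeCount G := by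
      gcongr; exact card_triangles_through_vertex_le_edgeCount G v
    rw [mul_pow _ √_, Real.sq_sqrt (by positivity), sq]
    gcongr
  calc 6 * (triangleCount G : ℝ) = ∑ v, 2 * (T v : ℝ) := by
        rw [← mul_sum, ← Nat.cast_sum, sum_card_triangles_through_vertex]; push_cast; ring
    _ ≤ ∑ v, deg G v * √(2 * edgeCount G) := sum_le_sum fun v _ ↦ hvertex v
    _ = 2 * edgeCount G * √(2 * edgeCount G) := by
        rw [← sum_mul, ← Nat.cast_sum, sum_deg]; push_cast; rfl
    _ = (2 * edgeCount G : ℝ) ^ (3 / 2 : ℝ) := by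
        rw [show (3 / 2 : ℝ) = 1 + 1 / 2 by norm_num,
          Real.rpow_one_add' (by positivity) (by norm_num), Real.sqrt_eq_rpow]

lemma rpow_two_thirds_div_two_le_edgeCount {G : SimpleGraph V} {x : ℝ} (hx : 0 ≤ x)
    (h : x ≤ triangleCount G) : (6 * x) ^ (2 / 3 : ℝ) / 2 ≤ edgeCount G := by
  rw [div_le_iff₀' two_pos]
  calc (6 * x) ^ (2 / 3 : ℝ) ≤ ((2 * edgeCount G : ℝ) ^ (3 / 2 : ℝ)) ^ (2 / 3 : ℝ) := by
        gcongr; exact le_trans (by gcongr) (six_mul_triangleCount_le G)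
    _ = 2 * edgeCount G := by
        rw [← Real.rpow_mul (by positivity)]; norm_num

end Triangles

section RandomGraph

variable {n : ℕ} {p : ℝ}

lemma graphProb_nonneg (hp₀ : 0 ≤ p) (hp₁ : p ≤ 1) (G : SimpleGraph (Fin n)) :
    0 ≤ graphProb n p G :=
  mul_nonneg (pow_nonneg hp₀ _) (pow_nonneg (sub_nonneg.2 hp₁) _)

lemma prob_eq_sum_filter (A : Set (SimpleGraph (Fin n))) :
    prob n p A = ∑ G with G ∈ A, graphProb n p G := by
  rw [prob, sum_filter]

lemma prob_mono (hp₀ : 0 ≤ p) (hp₁ : p ≤ 1) {A B : Set (SimpleGraph (Fin n))} (h : A ⊆ B) :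
    prob n p A ≤ prob n p B := by
  simp only [prob_eq_sum_filter]
  exact sum_le_sum_of_subset_of_nonneg (monotone_filter_right _ fun _ _ hG ↦ h hG)
    fun G _ _ ↦ graphProb_nonneg hp₀ hp₁ G

lemma prob_union_le (hp₀ : 0 ≤ p) (hp₁ : p ≤ 1) (A B : Set (SimpleGraph (Fin n))) :
    prob n p (A ∪ B) ≤ prob n p A + prob n p B := by
  simp only [prob_eq_sum_filter, Set.mem_union, filter_or]
  rw [← sum_union_inter]
  exact le_add_of_nonneg_right (sum_nonneg fun G _ ↦ graphProb_nonneg hp₀ hp₁ G)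

/-- Writing `H = F ⊔ S` with `S` a set of edges outside `F` turns the sum into the binomial
expansion of `(p + (1 - p)) ^ (n.choose 2 - edgeCount F)`. -/
lemma prob_le_eq_pow (p : ℝ) (F : SimpleGraph (Fin n)) :
    prob n p {H | F ≤ H} = p ^ edgeCount F := by
  let E (G : SimpleGraph (Fin n)) : Finset (Sym2 (Fin n)) := G.edgeFinset
  have hE (G : SimpleGraph (Fin n)) : edgeCount G = #(E G) := edgeCount_eq_card_edgeFinset G
  have hEmono {G H : SimpleGraph (Fin n)} (h : G ≤ H) : E G ⊆ E H :=
    SimpleGraph.edgeFinset_subset_edgeFinset.2 h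
  have hcard : n.choose 2 = edgeCount F + #(E Fᶜ) := by
    rw [← hE, ← edgeCount_sup_add_edgeCount_inf, sup_compl_eq_top, inf_compl_eq_bot,
      edgeCount_top, edgeCount_bot, Fintype.card_fin, add_zero]
  have hedges {S : Finset (Sym2 (Fin n))} (hS : S ⊆ E Fᶜ) :
      E ((F ⊔ SimpleGraph.fromEdgeSet S) \ F) = S := by
    ext e
    have := @hS e
    simp only [E, SimpleGraph.mem_edgeFinset, ← top_sdiff, SimpleGraph.edgeSet_sdiff,
      SimpleGraph.edgeSet_top, SimpleGraph.edgeSet_sup, SimpleGraph.edgeSet_fromEdgeSet,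
      Set.mem_sdiff, Set.mem_union, mem_coe] at this ⊢
    tauto
  calc prob n p {H | F ≤ H}
      = ∑ S ∈ (E Fᶜ).powerset, p ^ edgeCount F * (p ^ #S * (1 - p) ^ (#(E Fᶜ) - #S)) := by
        rw [prob_eq_sum_filter]
        symm
        refine sum_nbij' (fun S ↦ F ⊔ SimpleGraph.fromEdgeSet (S : Set (Sym2 (Fin n))))
          (fun H ↦ E (H \ F)) (by simp) (fun H _ ↦ ?_)
          (fun S hS ↦ hedges (mem_powerset.1 hS)) (fun H hH ↦ ?_) (fun S hS ↦ ?_)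
        · rw [mem_powerset]
          exact hEmono (by rw [sdiff_eq]; exact inf_le_right)
        · simpa [E] using hH
        · have hcount : edgeCount (F ⊔ SimpleGraph.fromEdgeSet S) = edgeCount F + #S := by
            rw [← edgeCount_sdiff_add_edgeCount le_sup_left, hE (_ \ _),
              hedges (mem_powerset.1 hS), add_comm]
          rw [graphProb, hcount, hcard, Nat.add_sub_add_left, pow_add, mul_assoc]
    _ = p ^ edgeCount F := by
        rw [← mul_sum, sum_pow_mul_eq_add_pow, add_sub_cancel, one_pow, mul_one]

lemma prob_exists_le_le_sum (hp₀ : 0 ≤ p) (hp₁ : p ≤ 1) (S : Finset (SimpleGraph (Fin n))) :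
    prob n p {G | ∃ F ∈ S, F ≤ G} ≤ ∑ F ∈ S, p ^ edgeCount F := by
  calc prob n p {G | ∃ F ∈ S, F ≤ G}
      ≤ ∑ F ∈ S, prob n p {G | F ≤ G} := by
        simp only [prob, Set.mem_ofPred_eq]
        rw [sum_comm]
        refine sum_le_sum fun G _ ↦ ?_
        split_ifs with h
        · obtain ⟨F, hF, hFG⟩ := h
          exact (if_pos hFG).ge.trans <| single_le_sum (f := fun F ↦ if F ≤ G then _ else _)
            (fun F _ ↦ ite_nonneg (graphProb_nonneg hp₀ hp₁ G) le_rfl) hF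
        · exact sum_nonneg fun F _ ↦ ite_nonneg (graphProb_nonneg hp₀ hp₁ G) le_rfl
    _ = ∑ F ∈ S, p ^ edgeCount F := sum_congr rfl fun F _ ↦ prob_le_eq_pow p F

lemma pow_choose_two_le_prob (hp₀ : 0 ≤ p) (hp₁ : p ≤ 1) {s : ℕ} (hs : s ≤ n) {k : ℝ}
    (hk : k ≤ s.choose 3) :
    p ^ s.choose 2 ≤ prob n p {G | k ≤ triangleCount G} := by
  obtain ⟨t, -, ht⟩ := exists_subset_card_eq (s := (univ : Finset (Fin n))) (by simpa using hs)
  rw [← ht, ← edgeCount_cliqueOn, ← prob_le_eq_pow]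
  refine prob_mono hp₀ hp₁ fun G hG ↦ hk.trans ?_
  exact_mod_cast ht ▸ choose_three_le_triangleCount hG

end RandomGraph

section Moments

variable {n : ℕ} {p : ℝ} {ι : Type*} {K : ι → SimpleGraph (Fin n)} {s : Finset ι}

/-- The number of members of the family `K`, indexed by `s`, that are contained in `G`. -/
def copyCount {V ι : Type*} (K : ι → SimpleGraph V) (s : Finset ι) (G : SimpleGraph V) : ℕ :=
  #{i ∈ s | K i ≤ G}

lemma sum_graphProb_mul_copyCount_pow_succ (A : Set (SimpleGraph (Fin n)))
    (F : SimpleGraph (Fin n)) (r : ℕ) :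
    ∑ G with G ∈ A ∧ F ≤ G, graphProb n p G * (copyCount K s G : ℝ) ^ (r + 1) =
      ∑ i ∈ s, ∑ G with G ∈ A ∧ F ⊔ K i ≤ G, graphProb n p G * (copyCount K s G : ℝ) ^ r := by
  have hcount (G : SimpleGraph (Fin n)) :
      (copyCount K s G : ℝ) = ∑ i ∈ s, if K i ≤ G then 1 else 0 := by
    rw [copyCount, card_filter, Nat.cast_sum]
    exact sum_congr rfl fun i _ ↦ by split_ifs <;> simp
  calc ∑ G with G ∈ A ∧ F ≤ G, graphProb n p G * (copyCount K s G : ℝ) ^ (r + 1)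
      = ∑ G with G ∈ A ∧ F ≤ G, ∑ i ∈ s,
          if K i ≤ G then graphProb n p G * (copyCount K s G : ℝ) ^ r else 0 := by
        refine sum_congr rfl fun G _ ↦ ?_
        rw [pow_succ, ← mul_assoc]
        nth_rw 2 [hcount]
        simp only [mul_sum, mul_ite, mul_one, mul_zero]
    _ = _ := by
        rw [sum_comm]
        simp only [← sum_filter, filter_filter, sup_le_iff, and_assoc]

/-- The `r`-th moment is a sum over `r`-tuples of members of the family; exposing the tuple one
member at a time conditions on ever larger graphs `F`, and each step costs a factor `B`. -/
lemma sum_graphProb_mul_copyCount_pow_le (hp₀ : 0 ≤ p) (hp₁ : p ≤ 1) {m M : ℕ}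
    (hK : ∀ i ∈ s, edgeCount (K i) ≤ m) {A : Set (SimpleGraph (Fin n))} {B : ℝ} (hB₀ : 0 ≤ B)
    (hB : ∀ G ∈ A, ∀ F ≤ G, edgeCount F ≤ M →
      ∑ i ∈ s, p ^ edgeCount (F ⊔ K i) ≤ p ^ edgeCount F * B)
    {r : ℕ} {F : SimpleGraph (Fin n)} (hF : edgeCount F + m * r ≤ M) :
    ∑ G with G ∈ A ∧ F ≤ G, graphProb n p G * (copyCount K s G : ℝ) ^ r ≤
      p ^ edgeCount F * B ^ r := by
  induction r generalizing F with
  | zero =>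
    simp only [pow_zero, mul_one]
    rw [← prob_le_eq_pow, prob_eq_sum_filter]
    exact sum_le_sum_of_subset_of_nonneg (monotone_filter_right _ fun G _ hG ↦ hG.2)
      fun G _ _ ↦ graphProb_nonneg hp₀ hp₁ G
  | succ r ih =>
    by_cases hA : ∃ G ∈ A, F ≤ G
    · obtain ⟨G, hGA, hFG⟩ := hA
      calc ∑ G with G ∈ A ∧ F ≤ G, graphProb n p G * (copyCount K s G : ℝ) ^ (r + 1)
          = ∑ i ∈ s, ∑ G with G ∈ A ∧ F ⊔ K i ≤ G,
              graphProb n p G * (copyCount K s G : ℝ) ^ r :=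
            sum_graphProb_mul_copyCount_pow_succ A F r
        _ ≤ ∑ i ∈ s, p ^ edgeCount (F ⊔ K i) * B ^ r := by
            refine sum_le_sum fun i hi ↦ ih ?_
            have := edgeCount_sup_add_edgeCount_inf F (K i)
            have := hK i hi
            lia
        _ ≤ p ^ edgeCount F * B * B ^ r := by
            rw [← sum_mul]
            gcongr
            exact hB G hGA F hFG (by lia)
        _ = p ^ edgeCount F * B ^ (r + 1) := by ring
    · rw [filter_false_of_mem fun G _ hG ↦ hA ⟨G, hG⟩, sum_empty]
      positivity

lemma prob_mul_le_sum_graphProb_mul (hp₀ : 0 ≤ p) (hp₁ : p ≤ 1) {S A : Set (SimpleGraph (Fin n))}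
    (hSA : S ⊆ A) {f : SimpleGraph (Fin n) → ℝ} (hf : ∀ G, 0 ≤ f G) {c : ℝ}
    (hc : ∀ G ∈ S, c ≤ f G) :
    prob n p S * c ≤ ∑ G with G ∈ A, graphProb n p G * f G := by
  calc prob n p S * c ≤ ∑ G with G ∈ S, graphProb n p G * f G := by
        rw [prob_eq_sum_filter, sum_mul]
        exact sum_le_sum fun G hG ↦ mul_le_mul_of_nonneg_left
          (hc G ((mem_filter_univ G).1 hG)) (graphProb_nonneg hp₀ hp₁ G)
    _ ≤ ∑ G with G ∈ A, graphProb n p G * f G :=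
        sum_le_sum_of_subset_of_nonneg (monotone_filter_right _ fun G _ hG ↦ hSA hG)
          fun G _ _ ↦ mul_nonneg (graphProb_nonneg hp₀ hp₁ G) (hf G)

lemma prob_le_copyCount_inter_le (hp₀ : 0 ≤ p) (hp₁ : p ≤ 1) {m r : ℕ}
    (hK : ∀ i ∈ s, edgeCount (K i) ≤ m) {A : Set (SimpleGraph (Fin n))} {B : ℝ} (hB₀ : 0 ≤ B)
    (hB : ∀ G ∈ A, ∀ F ≤ G, edgeCount F ≤ m * r →
      ∑ i ∈ s, p ^ edgeCount (F ⊔ K i) ≤ p ^ edgeCount F * B)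
    {k : ℝ} (hk : 0 < k) :
    prob n p ({G | k ≤ copyCount K s G} ∩ A) ≤ (B / k) ^ r := by
  have hmoment := sum_graphProb_mul_copyCount_pow_le hp₀ hp₁ hK hB₀ hB (F := ⊥) (r := r)
    (by rw [edgeCount_bot, zero_add])
  simp only [bot_le, and_true, edgeCount_bot, pow_zero, one_mul] at hmoment
  rw [div_pow, le_div_iff₀ (by positivity)]
  refine (prob_mul_le_sum_graphProb_mul hp₀ hp₁ Set.inter_subset_right (fun G ↦ by positivity)
    fun G hG ↦ ?_).trans hmoment
  exact pow_le_pow_left₀ hk.le hG.1 r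

end Moments

section Seeds

variable {n : ℕ} {p : ℝ}

lemma pow_edgeCount_sup_cliqueOn_le (hp₀ : 0 ≤ p) (hp₁ : p ≤ 1) (F : SimpleGraph (Fin n))
    {t : Finset (Fin n)} (ht : #t = 3) :
    p ^ edgeCount (F ⊔ cliqueOn t) ≤ p ^ edgeCount F *
      ((if cliqueOn t ≤ F then 1 else 0) + p * (if F ⊓ cliqueOn t ≠ ⊥ then 1 else 0) + p ^ 3) := by
  by_cases hsub : cliqueOn t ≤ F
  · rw [sup_eq_left.2 hsub, if_pos hsub]
    refine le_mul_of_one_le_right (by positivity) ?_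
    rw [add_assoc]
    exact le_add_of_nonneg_right (by split_ifs <;> positivity)
  rw [if_neg hsub, zero_add]
  by_cases hinf : F ⊓ cliqueOn t = ⊥
  · have hcard : edgeCount (F ⊔ cliqueOn t) = edgeCount F + 3 := by
      simpa [hinf, edgeCount_bot, edgeCount_cliqueOn, ht] using
        edgeCount_sup_add_edgeCount_inf F (cliqueOn t)
    simp [hcard, hinf, pow_add]
  · have hcard : edgeCount F + 1 ≤ edgeCount (F ⊔ cliqueOn t) :=
      edgeCount_strictMono (left_lt_sup.2 hsub)
    rw [if_pos hinf, mul_one]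
    calc p ^ edgeCount (F ⊔ cliqueOn t) ≤ p ^ (edgeCount F + 1) :=
          pow_le_pow_of_le_one hp₀ hp₁ hcard
      _ ≤ p ^ edgeCount F * (p + p ^ 3) := by
          rw [pow_succ]; gcongr; exact le_add_of_nonneg_right (by positivity)

lemma sum_pow_edgeCount_sup_cliqueOn_le (hp₀ : 0 ≤ p) (hp₁ : p ≤ 1) (F : SimpleGraph (Fin n)) :
    ∑ t ∈ powersetCard 3 univ, p ^ edgeCount (F ⊔ cliqueOn t) ≤
      p ^ edgeCount F * (triangleCount F + p * (n * edgeCount F) + p ^ 3 * n ^ 3) := by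
  calc ∑ t ∈ powersetCard 3 univ, p ^ edgeCount (F ⊔ cliqueOn t)
      ≤ ∑ t ∈ powersetCard 3 univ, p ^ edgeCount F * ((if cliqueOn t ≤ F then 1 else 0) +
          p * (if F ⊓ cliqueOn t ≠ ⊥ then 1 else 0) + p ^ 3) :=
        sum_le_sum fun t ht ↦ pow_edgeCount_sup_cliqueOn_le hp₀ hp₁ F (mem_powersetCard_univ.1 ht)
    _ = p ^ edgeCount F * (triangleCount F + p * #{t ∈ (univ : Finset (Fin n)).powersetCard 3 |
          F ⊓ cliqueOn t ≠ ⊥} + p ^ 3 * n.choose 3) := by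
        rw [← mul_sum, sum_add_distrib, sum_add_distrib, ← mul_sum, sum_boole, sum_boole,
          sum_const, card_powersetCard, card_fin, nsmul_eq_mul, ← triangleCount_eq_card_cliqueOn_le,
          mul_comm (p ^ 3)]
    _ ≤ p ^ edgeCount F * (triangleCount F + p * (n * edgeCount F) + p ^ 3 * n ^ 3) := by
        gcongr
        · exact_mod_cast Fintype.card_fin n ▸ card_triples_sharing_edge_le F
        · exact_mod_cast Nat.choose_le_pow n 3

/-- The graphs containing no *seed*: no subgraph with at most `M` edges has at least `a`
triangles. -/
def seedFree {V : Type*} [Fintype V] (M : ℕ) (a : ℝ) : Set (SimpleGraph V) :=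
  {G | ∀ F ≤ G, edgeCount F ≤ M → triangleCount F < a}

lemma prob_le_triangleCount_inter_seedFree_le (hp₀ : 0 ≤ p) (hp₁ : p ≤ 1) (r : ℕ) {a k : ℝ}
    (ha : 0 ≤ a) (hk : 0 < k) :
    prob n p ({G | k ≤ triangleCount G} ∩ seedFree (3 * r) a) ≤
      ((a + p * (n * (3 * r)) + p ^ 3 * n ^ 3) / k) ^ r := by
  simp only [triangleCount_eq_card_cliqueOn_le]
  refine prob_le_copyCount_inter_le (K := cliqueOn) (m := 3) hp₀ hp₁
    (fun t ht ↦ ?_) (by positivity) (fun G hG F hFG hF ↦ ?_) hk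
  · rw [edgeCount_cliqueOn, mem_powersetCard_univ.1 ht]; rfl
  · refine (sum_pow_edgeCount_sup_cliqueOn_le hp₀ hp₁ F).trans ?_
    gcongr
    · exact (hG F hFG hF).le
    · exact_mod_cast hF

end Seeds

section Cores

variable {V : Type*} [Fintype V]

/-- A *core*: a graph in which every non-isolated vertex has degree at least `τ`. Unlike `IsCore`,
this bounds degrees instead of the effect of deleting an edge on `condTri`, and it does not record
the number of triangles. -/
def HasMinSupportDegree (τ : ℝ) (G : SimpleGraph V) : Prop :=
  ∀ v ∈ G.support, τ ≤ deg G v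

/-- A subgraph maximising `triangleCount - τ * edgeCount` has the required degrees, since an edge
`uv` lies in at most `deg u` triangles. -/
lemma exists_le_hasMinSupportDegree {τ : ℝ} (hτ : 0 ≤ τ) (F : SimpleGraph V) :
    ∃ H ≤ F, HasMinSupportDegree τ H ∧
      triangleCount F - τ * edgeCount F ≤ (triangleCount H : ℝ) := by
  obtain ⟨H, hHF, hmax⟩ := exists_max_image ({H | H ≤ F} : Finset (SimpleGraph V))
    (fun H ↦ (triangleCount H : ℝ) - τ * edgeCount H) ⟨F, by simp⟩
  simp only [mem_filter_univ] at hHF hmax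
  refine ⟨H, hHF, fun u ⟨v, huv⟩ ↦ ?_, ?_⟩
  · have hdel := hmax (H.deleteEdges {s(u, v)}) ((SimpleGraph.deleteEdges_le _).trans hHF)
    have hedge : (edgeCount (H.deleteEdges {s(u, v)}) : ℝ) + 1 = edgeCount H :=
      mod_cast edgeCount_deleteEdges_singleton_add_one huv
    have htri : (triangleCount H : ℝ) ≤ triangleCount (H.deleteEdges {s(u, v)}) + deg H u :=
      mod_cast triangleCount_le_triangleCount_deleteEdges_add_deg huv.ne
    rw [← hedge] at hdel
    linarith
  · have := hmax F le_rfl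
    have : 0 ≤ τ * edgeCount H := by positivity
    linarith

lemma HasMinSupportDegree.card_support_le {τ : ℝ} (hτ : 0 < τ) {G : SimpleGraph V}
    (hG : HasMinSupportDegree τ G) : #G.support.toFinset ≤ 2 * edgeCount G / τ := by
  rw [le_div_iff₀ hτ, ← nsmul_eq_mul]
  calc #G.support.toFinset • τ ≤ ∑ v ∈ G.support.toFinset, (deg G v : ℝ) :=
        card_nsmul_le_sum _ _ _ fun v hv ↦ hG v (Set.mem_toFinset.1 hv)
    _ = 2 * edgeCount G := mod_cast sum_support_deg G

lemma card_filter_card_le_le_pow (V : Type*) [Fintype V] (r : ℕ) :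
    #{S : Finset V | #S ≤ r} ≤ (Fintype.card V + 1) ^ r := by
  calc #{S : Finset V | #S ≤ r}
      = ∑ i ∈ range (r + 1), (Fintype.card V).choose i := by
        rw [card_eq_sum_card_fiberwise (f := card) (t := range (r + 1))
          fun S hS ↦ by simpa [Nat.lt_succ_iff] using hS]
        refine sum_congr rfl fun i hi ↦ ?_
        rw [← card_univ, ← card_powersetCard, filter_filter, powersetCard_eq_filter,
          powerset_univ]
        congr 1
        ext S
        simp only [mem_filter_univ, and_iff_right_iff_imp]
        rintro rfl
        exact mem_range_succ_iff.1 hi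
    _ ≤ ∑ i ∈ range (r + 1), Fintype.card V ^ i * r.choose i := by
        refine sum_le_sum fun i hi ↦ (Nat.choose_le_pow _ _).trans ?_
        exact Nat.le_mul_of_pos_right _ (Nat.choose_pos (mem_range_succ_iff.1 hi))
    _ = (Fintype.card V + 1) ^ r := by simp [add_pow]

lemma card_edgeCount_eq_and_card_support_le (V : Type*) [Fintype V] (e r : ℕ) :
    #{G : SimpleGraph V | edgeCount G = e ∧ #G.support.toFinset ≤ r} ≤
      (Fintype.card V + 1) ^ r * (r.choose 2).choose e := by
  let E (G : SimpleGraph V) : Finset (Sym2 V) := G.edgeFinset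
  calc #{G : SimpleGraph V | edgeCount G = e ∧ #G.support.toFinset ≤ r}
      ≤ #(({S : Finset V | #S ≤ r} : Finset (Finset V)).biUnion
          fun S ↦ (E (cliqueOn S)).powersetCard e) := by
        refine card_le_card_of_injOn E (fun G hG ↦ ?_) fun G _ H _ h ↦
          SimpleGraph.edgeFinset_inj.1 h
        simp only [coe_filter, mem_univ, true_and, Set.mem_ofPred_eq] at hG
        simp only [mem_coe, mem_biUnion, mem_filter_univ, mem_powersetCard]
        exact ⟨G.support.toFinset, hG.2,
          SimpleGraph.edgeFinset_subset_edgeFinset.2 (le_cliqueOn_support G),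
          by rw [← edgeCount_eq_card_edgeFinset, hG.1]⟩
    _ ≤ #{S : Finset V | #S ≤ r} * (r.choose 2).choose e := by
        refine card_biUnion_le_card_mul _ _ _ fun S hS ↦ ?_
        rw [card_powersetCard, ← edgeCount_eq_card_edgeFinset, edgeCount_cliqueOn]
        exact Nat.choose_le_choose _ (Nat.choose_le_choose _ ((mem_filter_univ S).1 hS))
    _ ≤ _ := by gcongr; exact card_filter_card_le_le_pow V r

lemma choose_le_exp_one_mul_div_pow (N e : ℕ) : (N.choose e : ℝ) ≤ (Real.exp 1 * N / e) ^ e := by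
  rcases e.eq_zero_or_pos with rfl | he
  · simp
  calc (N.choose e : ℝ) ≤ N ^ e / e.factorial := Nat.choose_le_pow_div e N
    _ = N ^ e / e ^ e * (e ^ e / e.factorial) := by field_simp
    _ ≤ N ^ e / e ^ e * Real.exp e := by
        gcongr; exact Real.pow_div_factorial_le_exp _ (by positivity) e
    _ = (Real.exp 1 * N / e) ^ e := by rw [← Real.exp_one_pow, div_pow, mul_pow]; ring

lemma card_hasMinSupportDegree_edgeCount_eq_le (V : Type*) [Fintype V] {τ : ℝ} (hτ : 0 < τ)
    (e : ℕ) :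
    #{G : SimpleGraph V | HasMinSupportDegree τ G ∧ edgeCount G = e} ≤
      (((Fintype.card V : ℝ) + 1) ^ (2 / τ) * (2 * Real.exp 1 * e / τ ^ 2)) ^ e := by
  let r := ⌊2 * e / τ⌋₊
  have hr : (r : ℝ) ≤ 2 * e / τ := Nat.floor_le (by positivity)
  have hcard : #{G : SimpleGraph V | HasMinSupportDegree τ G ∧ edgeCount G = e} ≤
      #{G : SimpleGraph V | edgeCount G = e ∧ #G.support.toFinset ≤ r} :=
    card_le_card <| monotone_filter_right _ fun G _ hG ↦
      ⟨hG.2, Nat.le_floor (hG.2 ▸ hG.1.card_support_le hτ)⟩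
  have hvertices : ((Fintype.card V : ℝ) + 1) ^ r ≤ (((Fintype.card V : ℝ) + 1) ^ (2 / τ)) ^ e := by
    rw [← Real.rpow_natCast, ← Real.rpow_mul_natCast (by positivity)]
    refine Real.rpow_le_rpow_of_exponent_le (by simp) (hr.trans_eq ?_)
    ring
  have hedges : ((r.choose 2).choose e : ℝ) ≤ (2 * Real.exp 1 * e / τ ^ 2) ^ e := by
    refine (choose_le_exp_one_mul_div_pow _ e).trans
      (pow_le_pow_left₀ (by positivity) ?_ e)
    calc Real.exp 1 * (r.choose 2 : ℕ) / e ≤ Real.exp 1 * ((2 * e / τ) ^ 2 / 2) / e := by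
          gcongr; exact (Nat.choose_le_pow_div 2 r).trans (by norm_num; gcongr)
      _ = 2 * Real.exp 1 * e / τ ^ 2 := by
          rcases eq_or_ne e 0 with rfl | he
          · simp
          · field_simp
  calc (#{G : SimpleGraph V | HasMinSupportDegree τ G ∧ edgeCount G = e} : ℝ)
      ≤ ((Fintype.card V : ℝ) + 1) ^ r * (r.choose 2).choose e :=
        mod_cast hcard.trans (card_edgeCount_eq_and_card_support_le V e r)
    _ ≤ _ := by rw [mul_pow]; gcongr

variable {n : ℕ} {p : ℝ}

lemma sum_pow_edgeCount_hasMinSupportDegree_le (hp₀ : 0 ≤ p) {τ : ℝ} (hτ : 0 < τ) {e : ℕ} {q : ℝ}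
    (hq : ((n : ℝ) + 1) ^ (2 / τ) * (2 * Real.exp 1 * e / τ ^ 2) * p ≤ q) :
    ∑ F : SimpleGraph (Fin n) with HasMinSupportDegree τ F ∧ edgeCount F = e, p ^ edgeCount F ≤
      q ^ e := by
  have hcard : (#{F : SimpleGraph (Fin n) | HasMinSupportDegree τ F ∧ edgeCount F = e} : ℝ) ≤
      (((n : ℝ) + 1) ^ (2 / τ) * (2 * Real.exp 1 * e / τ ^ 2)) ^ e := by
    convert card_hasMinSupportDegree_edgeCount_eq_le (Fin n) hτ e
    rw [Fintype.card_fin]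
  rw [sum_congr rfl fun F hF ↦ by rw [((mem_filter_univ F).1 hF).2], sum_const, nsmul_eq_mul]
  calc _ ≤ (((n : ℝ) + 1) ^ (2 / τ) * (2 * Real.exp 1 * e / τ ^ 2)) ^ e * p ^ e := by gcongr
    _ ≤ q ^ e := by rw [← mul_pow]; gcongr

lemma prob_exists_hasMinSupportDegree_le (hp₀ : 0 ≤ p) (hp₁ : p ≤ 1) {τ : ℝ} (hτ : 0 < τ)
    {m : ℝ} (hm : 0 ≤ m) {M : ℕ} {q : ℝ} (hq₁ : q ≤ 1)
    (hq : ((n : ℝ) + 1) ^ (2 / τ) * (2 * Real.exp 1 * M / τ ^ 2) * p ≤ q) :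
    prob n p {G | ∃ F ≤ G, HasMinSupportDegree τ F ∧ m ≤ edgeCount F ∧ edgeCount F ≤ M} ≤
      (M + 1) * q ^ m := by
  have hq₀ : 0 ≤ q := le_trans (by positivity) hq
  let S : Finset (SimpleGraph (Fin n)) :=
    {F | HasMinSupportDegree τ F ∧ m ≤ edgeCount F ∧ edgeCount F ≤ M}
  have hS (F : SimpleGraph (Fin n)) :
      F ∈ S ↔ HasMinSupportDegree τ F ∧ m ≤ edgeCount F ∧ edgeCount F ≤ M := mem_filter_univ F
  have hfiber (e : ℕ) (he : e ∈ range (M + 1)) :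
      ∑ F ∈ S with edgeCount F = e, p ^ edgeCount F ≤ q ^ m := by
    rcases lt_or_ge (e : ℝ) m with hem | hme
    · rw [filter_false_of_mem, sum_empty]
      · positivity
      · rintro F hF rfl
        exact hem.not_ge ((hS F).1 hF).2.1
    have heM : (e : ℝ) ≤ M := mod_cast mem_range_succ_iff.1 he
    calc ∑ F ∈ S with edgeCount F = e, p ^ edgeCount F
        ≤ ∑ F with HasMinSupportDegree τ F ∧ edgeCount F = e, p ^ edgeCount F := by
          refine sum_le_sum_of_subset_of_nonneg (fun F hF ↦ ?_) fun F _ _ ↦ by positivity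
          rw [mem_filter, hS] at hF
          exact (mem_filter_univ F).2 ⟨hF.1.1, hF.2⟩
      _ ≤ q ^ e := sum_pow_edgeCount_hasMinSupportDegree_le hp₀ hτ (le_trans (by gcongr) hq)
      _ ≤ q ^ m := by
          rw [← Real.rpow_natCast]
          exact Real.rpow_le_rpow_of_exponent_ge' hq₀ hq₁ hm hme
  calc prob n p {G | ∃ F ≤ G, HasMinSupportDegree τ F ∧ m ≤ edgeCount F ∧ edgeCount F ≤ M}
      ≤ prob n p {G | ∃ F ∈ S, F ≤ G} :=
        prob_mono hp₀ hp₁ fun G ⟨F, hFG, hF⟩ ↦ ⟨F, (hS F).2 hF, hFG⟩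
    _ ≤ ∑ F ∈ S, p ^ edgeCount F := prob_exists_le_le_sum hp₀ hp₁ S
    _ = ∑ e ∈ range (M + 1), ∑ F ∈ S with edgeCount F = e, p ^ edgeCount F :=
        (sum_fiberwise_of_maps_to
          (fun F hF ↦ mem_range_succ_iff.2 ((hS F).1 hF).2.2) _).symm
    _ ≤ (M + 1) * q ^ m := by simpa using sum_le_card_nsmul _ _ _ hfiber

lemma exists_hasMinSupportDegree_of_notMem_seedFree {M : ℕ} {a b τ : ℝ} (hτ : 0 ≤ τ)
    (hb : 0 ≤ b) (hab : b + τ * M ≤ a) {G : SimpleGraph V} (hG : G ∉ seedFree M a) :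
    ∃ F ≤ G, HasMinSupportDegree τ F ∧ (6 * b) ^ (2 / 3 : ℝ) / 2 ≤ edgeCount F ∧
      edgeCount F ≤ M := by
  simp only [seedFree, Set.mem_ofPred_eq, not_forall, not_lt] at hG
  obtain ⟨F, hFG, hFM, haF⟩ := hG
  obtain ⟨H, hHF, hH, hFH⟩ := exists_le_hasMinSupportDegree hτ F
  refine ⟨H, hHF.trans hFG, hH, rpow_two_thirds_div_two_le_edgeCount hb ?_,
    (edgeCount_mono hHF).trans hFM⟩
  have : τ * edgeCount F ≤ τ * M := by gcongr
  linarith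

lemma prob_le_triangleCount_le (hp₀ : 0 ≤ p) (hp₁ : p ≤ 1) {r : ℕ} {k a b τ q : ℝ} (hk : 0 < k)
    (hτ : 0 < τ) (hb : 0 ≤ b) (hab : b + τ * (3 * r) ≤ a) (hq₁ : q ≤ 1)
    (hq : ((n : ℝ) + 1) ^ (2 / τ) * (2 * Real.exp 1 * (3 * r) / τ ^ 2) * p ≤ q) :
    prob n p {G | k ≤ triangleCount G} ≤
      ((a + p * (n * (3 * r)) + p ^ 3 * n ^ 3) / k) ^ r +
        (3 * r + 1) * q ^ ((6 * b) ^ (2 / 3 : ℝ) / 2) := by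
  have hM : ((3 * r : ℕ) : ℝ) = 3 * r := by push_cast; rfl
  have ha : 0 ≤ a := le_trans (by positivity) hab
  rw [← hM] at hab hq
  have hcores := prob_exists_hasMinSupportDegree_le hp₀ hp₁ hτ
    (m := (6 * b) ^ (2 / 3 : ℝ) / 2) (by positivity) hq₁ hq
  rw [hM] at hcores
  refine le_trans (prob_mono hp₀ hp₁ fun G hG ↦ ?_) <| (prob_union_le hp₀ hp₁ _ _).trans <|
    add_le_add (prob_le_triangleCount_inter_seedFree_le hp₀ hp₁ r ha hk) hcores
  by_cases hseed : G ∈ seedFree (3 * r) a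
  · exact .inl ⟨hG, hseed⟩
  · exact .inr (exists_hasMinSupportDegree_of_notMem_seedFree hτ.le hb hab hseed)

end Cores

section Asymptotics

open Topology

lemma tendsto_log_div_of_exp_bounds {α : Type*} {f : Filter α} {P x : α → ℝ} {c : ℝ}
    (hx : ∀ᶠ i in f, 0 < x i) (hlower : ∀ b > c, ∀ᶠ i in f, Real.exp (-(b * x i)) ≤ P i)
    (hupper : ∀ a < c, ∀ᶠ i in f, P i ≤ Real.exp (-(a * x i))) :
    Tendsto (fun i ↦ Real.log (P i) / x i) f (𝓝 (-c)) := by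
  have hpos : ∀ᶠ i in f, 0 < P i :=
    (hlower (c + 1) (lt_add_one c)).mono fun i hi ↦ (Real.exp_pos _).trans_le hi
  refine tendsto_order.2 ⟨fun u hu ↦ ?_, fun u hu ↦ ?_⟩
  · obtain ⟨b, hcb, hbu⟩ := exists_between (lt_neg_of_lt_neg hu)
    filter_upwards [hx, hpos, hlower b hcb] with i hxi hPi hi
    rw [lt_div_iff₀ hxi]
    calc u * x i < -(b * x i) := by nlinarith
      _ ≤ Real.log (P i) := (Real.le_log_iff_exp_le hPi).2 hi
  · obtain ⟨a, hua, hac⟩ := exists_between (neg_lt_of_neg_lt hu)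
    filter_upwards [hx, hpos, hupper a hac] with i hxi hPi hi
    rw [div_lt_iff₀ hxi]
    calc Real.log (P i) ≤ -(a * x i) := (Real.log_le_iff_le_exp hPi).2 hi
      _ < u * x i := by nlinarith

variable {p K L r : ℕ → ℝ} {c δ η : ℝ}

lemma tendsto_conditional_excess_zero (hK : Tendsto K atTop atTop) (hL : Tendsto L atTop atTop)
    (hpK : Tendsto (fun n ↦ n * p n * L n / K n) atTop (𝓝 0))
    (hr : Tendsto (fun n ↦ r n / (K n ^ 2 * L n)) atTop (𝓝 c)) :
    Tendsto (fun n ↦ (p n * (n * (3 * r n)) + p n ^ 3 * n ^ 3) / K n ^ 3) atTop (𝓝 0) := by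
  have hlim := ((hr.const_mul 3).mul hpK).add ((hpK.mul hL.inv_tendsto_atTop).pow 3)
  simp only [mul_zero, ne_eq, OfNat.ofNat_ne_zero, not_false_eq_true, zero_pow, add_zero] at hlim
  refine hlim.congr' ?_
  filter_upwards [hK.eventually_gt_atTop 0, hL.eventually_gt_atTop 0] with n hKn hLn
  simp only [Pi.inv_apply]
  field_simp

lemma eventually_vertex_choices_le (hK : Tendsto K atTop atTop) (hL : Tendsto L atTop atTop)
    (hlog : Tendsto (fun n : ℕ ↦ Real.log n / K n) atTop (𝓝 0))
    (hr : Tendsto (fun n ↦ r n / (K n ^ 2 * L n)) atTop (𝓝 c)) (hη : 0 < η) :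
    ∀ᶠ n : ℕ in atTop, ((n : ℝ) + 1) ^ (2 / (δ * K n ^ 3 / r n)) ≤ Real.exp (η * L n) := by
  have hlog' : Tendsto (fun n : ℕ ↦ Real.log (n + 1) / K n) atTop (𝓝 0) := by
    simpa [div_eq_mul_inv, ← add_mul] using
      hlog.add (Real.tendsto_log_nat_add_one_sub_log.mul hK.inv_tendsto_atTop)
  have hlim := (hr.const_mul (2 / δ)).mul hlog'
  rw [mul_zero] at hlim
  filter_upwards [hK.eventually_gt_atTop 0, hL.eventually_gt_atTop 0,
    hlim.eventually_le_const hη] with n hKn hLn hn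
  rw [Real.rpow_def_of_pos (by positivity), Real.exp_le_exp, ← div_le_iff₀ hLn]
  convert hn using 1
  field_simp

lemma eventually_edge_choices_le (hK : Tendsto K atTop atTop) (hL : Tendsto L atTop atTop)
    (hr : Tendsto (fun n ↦ r n / (K n ^ 2 * L n)) atTop (𝓝 c)) (hη : 0 < η) :
    ∀ᶠ n in atTop, 2 * Real.exp 1 * (3 * r n) / (δ * K n ^ 3 / r n) ^ 2 ≤ Real.exp (η * L n) := by
  have hexp := (tendsto_rpow_mul_exp_neg_mul_atTop_nhds_zero 3 η hη).comp hL
  have hlim := ((hr.pow 3).const_mul (6 * Real.exp 1 / δ ^ 2)).mul hexp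
  rw [mul_zero] at hlim
  filter_upwards [hK.eventually_gt_atTop 0, hL.eventually_gt_atTop 0,
    hlim.eventually_le_const one_pos] with n hKn hLn hn
  rw [← div_le_one (Real.exp_pos _)]
  convert hn using 1
  rw [Function.comp_apply, neg_mul, Real.exp_neg, Real.rpow_ofNat]
  field_simp
  ring

lemma eventually_core_rate_le (hK : Tendsto K atTop atTop) (hL : Tendsto L atTop atTop)
    (hlog : Tendsto (fun n : ℕ ↦ Real.log n / K n) atTop (𝓝 0))
    (hr : Tendsto (fun n ↦ r n / (K n ^ 2 * L n)) atTop (𝓝 c)) (hη : 0 < η) :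
    ∀ᶠ n : ℕ in atTop, ((n : ℝ) + 1) ^ (2 / (δ * K n ^ 3 / r n)) *
      (2 * Real.exp 1 * (3 * r n) / (δ * K n ^ 3 / r n) ^ 2) * Real.exp (-L n) ≤
        Real.exp (-((1 - η) * L n)) := by
  filter_upwards [eventually_vertex_choices_le (δ := δ) hK hL hlog hr (half_pos hη),
    eventually_edge_choices_le (δ := δ) hK hL hr (half_pos hη)] with n hvertex hedge
  calc _ ≤ Real.exp (η / 2 * L n) * Real.exp (η / 2 * L n) * Real.exp (-L n) := by
        gcongr ?_ * _
        exact mul_le_mul_of_nonneg hvertex hedge (by positivity) (by positivity)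
    _ = Real.exp (-((1 - η) * L n)) := by rw [← Real.exp_add, ← Real.exp_add]; ring_nf

lemma eventually_add_two_le_exp {x s : ℕ → ℝ} (hx : Tendsto x atTop atTop)
    (hs : Tendsto (fun n ↦ s n / x n) atTop (𝓝 c)) (hη : 0 < η) :
    ∀ᶠ n in atTop, s n + 2 ≤ Real.exp (η * x n) := by
  have hexp := (tendsto_rpow_mul_exp_neg_mul_atTop_nhds_zero 1 η hη).comp hx
  have hlim := (hs.add (hx.inv_tendsto_atTop.const_mul 2)).mul hexp
  rw [mul_zero] at hlim
  filter_upwards [hx.eventually_gt_atTop 0, hlim.eventually_le_const one_pos] with n hxn hn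
  rw [← div_le_one (Real.exp_pos _)]
  convert hn using 1
  rw [Function.comp_apply, neg_mul, Real.exp_neg, Real.rpow_one, Pi.inv_apply]
  field_simp

lemma eventually_seed_factor_le_exp (hK : Tendsto K atTop atTop) (hL : Tendsto L atTop atTop)
    (hpK : Tendsto (fun n ↦ n * p n * L n / K n) atTop (𝓝 0))
    (hr : Tendsto (fun n ↦ r n / (K n ^ 2 * L n)) atTop (𝓝 c)) (hη : 0 < η) :
    ∀ᶠ n in atTop, ((1 - η) * K n ^ 3 + p n * (n * (3 * r n)) + p n ^ 3 * n ^ 3) / K n ^ 3 ≤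
      Real.exp (-(η / 2)) := by
  filter_upwards [hK.eventually_gt_atTop 0,
    (tendsto_conditional_excess_zero hK hL hpK hr).eventually_le_const (half_pos hη)] with n hKn hn
  rw [add_assoc, add_div, mul_div_cancel_right₀ _ (by positivity)]
  linarith [Real.add_one_le_exp (-(η / 2))]

lemma tendsto_log_one_div_atTop {α : Type*} {f : Filter α} {p : α → ℝ}
    (hp : Tendsto p f (𝓝[>] 0)) : Tendsto (fun i ↦ Real.log (1 / p i)) f atTop := by
  simpa only [one_div, Real.log_inv, Function.comp_def] using
    tendsto_neg_atBot_atTop.comp (Real.tendsto_log_nhdsGT_zero.comp hp)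

lemma six_mul_mul_pow_three_rpow_two_thirds {x y : ℝ} (hx : 0 ≤ x) (hy : 0 ≤ y) :
    (6 * (x * y ^ 3)) ^ (2 / 3 : ℝ) = (6 * x) ^ (2 / 3 : ℝ) * y ^ 2 := by
  rw [← mul_assoc, Real.mul_rpow (by positivity) (by positivity), ← Real.rpow_natCast_mul hy]
  norm_num

lemma pow_le_exp_neg {r : ℕ} {η x y C : ℝ} (hy₀ : 0 ≤ y) (hη : 0 < η)
    (hy : y ≤ Real.exp (-(η / 2))) (hr : C / η * x ≤ r) : y ^ r ≤ Real.exp (-(C / 2 * x)) := by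
  refine (pow_le_pow_left₀ hy₀ hy r).trans ?_
  rw [← Real.exp_nat_mul, Real.exp_le_exp, mul_neg, neg_le_neg_iff]
  calc C / 2 * x = C / η * x * (η / 2) := by field_simp
    _ ≤ r * (η / 2) := by gcongr

lemma prob_le_triangleCount_le_exp {n r : ℕ} {p K L η : ℝ} (hp : p = Real.exp (-L)) (hK : 0 < K)
    (hL : 0 < L) (hη : 0 < η) (hη₂ : η < 1 / 2) (hr : 6 ^ (2 / 3 : ℝ) / η * (K ^ 2 * L) ≤ r)
    (hseed : ((1 - η) * K ^ 3 + p * (n * (3 * r)) + p ^ 3 * n ^ 3) / K ^ 3 ≤ Real.exp (-(η / 2)))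
    (hcore : ((n : ℝ) + 1) ^ (2 / (η / 3 * K ^ 3 / r)) *
      (2 * Real.exp 1 * (3 * r) / (η / 3 * K ^ 3 / r) ^ 2) * p ≤ Real.exp (-((1 - η) * L)))
    (hcount : (3 * r : ℝ) + 2 ≤ Real.exp (η * (K ^ 2 * L))) :
    prob n p {G | K ^ 3 ≤ triangleCount G} ≤
      Real.exp (-(((1 - η) * (6 * (1 - 2 * η)) ^ (2 / 3 : ℝ) / 2 - η) * (K ^ 2 * L))) := by
  have hr₀ : (0 : ℝ) < r := lt_of_lt_of_le (by positivity) hr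
  have hp₀ : 0 < p := hp ▸ Real.exp_pos _
  have hp₁ : p ≤ 1 := by rw [hp, Real.exp_le_one_iff]; linarith
  have hprob := prob_le_triangleCount_le (k := K ^ 3) (a := (1 - η) * K ^ 3)
    (b := (1 - 2 * η) * K ^ 3) (τ := η / 3 * K ^ 3 / r) hp₀.le hp₁ (by positivity)
    (by positivity) (mul_nonneg (by linarith) (by positivity))
    (le_of_eq (by field_simp; ring))
    (Real.exp_le_one_iff.2 (neg_nonpos.2 (mul_nonneg (by linarith) hL.le))) hcore
  generalize hD : (6 * (1 - 2 * η)) ^ (2 / 3 : ℝ) = D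
  have hrate : (1 - η) * D ≤ 6 ^ (2 / 3 : ℝ) := by
    rw [← hD]
    refine (mul_le_of_le_one_left (Real.rpow_nonneg (by linarith) _) (by linarith)).trans ?_
    exact Real.rpow_le_rpow (by linarith) (by linarith) (by norm_num)
  have hseeds : (((1 - η) * K ^ 3 + p * (n * (3 * r)) + p ^ 3 * n ^ 3) / K ^ 3) ^ r ≤
      Real.exp (-((1 - η) * D / 2 * (K ^ 2 * L))) := by
    have : 0 ≤ 1 - η := by linarith
    refine (pow_le_exp_neg (by positivity) hη hseed hr).trans ?_
    rw [Real.exp_le_exp, neg_le_neg_iff]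
    gcongr
  have hcores : Real.exp (-((1 - η) * L)) ^ ((6 * ((1 - 2 * η) * K ^ 3)) ^ (2 / 3 : ℝ) / 2) =
      Real.exp (-((1 - η) * D / 2 * (K ^ 2 * L))) := by
    rw [six_mul_mul_pow_three_rpow_two_thirds (by linarith) hK.le, hD, ← Real.exp_mul]
    ring_nf
  calc prob n p {G | K ^ 3 ≤ triangleCount G}
      ≤ (3 * r + 2) * Real.exp (-((1 - η) * D / 2 * (K ^ 2 * L))) := by
        rw [hcores] at hprob
        linarith
    _ ≤ Real.exp (η * (K ^ 2 * L)) * Real.exp (-((1 - η) * D / 2 * (K ^ 2 * L))) := by gcongr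
    _ = Real.exp (-(((1 - η) * D / 2 - η) * (K ^ 2 * L))) := by
        rw [← Real.exp_add]; ring_nf

lemma eventually_prob_le_triangleCount_le_exp (hp : Tendsto p atTop (𝓝[>] 0))
    (hK : Tendsto K atTop atTop) (hlog : Tendsto (fun n : ℕ ↦ Real.log n / K n) atTop (𝓝 0))
    (hpK : Tendsto (fun n ↦ n * p n * Real.log (1 / p n) / K n) atTop (𝓝 0))
    (hη : 0 < η) (hη₂ : η < 1 / 2) :
    ∀ᶠ n in atTop, prob n (p n) {G | K n ^ 3 ≤ triangleCount G} ≤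
      Real.exp (-(((1 - η) * (6 * (1 - 2 * η)) ^ (2 / 3 : ℝ) / 2 - η) *
        (K n ^ 2 * Real.log (1 / p n)))) := by
  let L (n : ℕ) : ℝ := Real.log (1 / p n)
  let r (n : ℕ) : ℕ := ⌈6 ^ (2 / 3 : ℝ) / η * (K n ^ 2 * L n)⌉₊
  have hL : Tendsto L atTop atTop := tendsto_log_one_div_atTop hp
  have hx : Tendsto (fun n ↦ K n ^ 2 * L n) atTop atTop :=
    ((tendsto_pow_atTop two_ne_zero).comp hK).atTop_mul_atTop₀ hL
  have hr : Tendsto (fun n ↦ r n / (K n ^ 2 * L n)) atTop (𝓝 (6 ^ (2 / 3 : ℝ) / η)) :=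
    (tendsto_nat_ceil_mul_div_atTop (by positivity)).comp hx
  have hr₃ : Tendsto (fun n ↦ 3 * r n / (K n ^ 2 * L n)) atTop (𝓝 (3 * (6 ^ (2 / 3 : ℝ) / η))) := by
    simpa only [mul_div_assoc] using hr.const_mul 3
  filter_upwards [hp.eventually self_mem_nhdsWithin, hK.eventually_gt_atTop 0,
    hL.eventually_gt_atTop 0, eventually_seed_factor_le_exp hK hL hpK hr hη,
    eventually_core_rate_le (δ := η / 3) hK hL hlog hr hη,
    eventually_add_two_le_exp hx hr₃ hη] with n hpn hKn hLn hseed hcore hcount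
  have hpL : p n = Real.exp (-L n) := by
    simp only [L, one_div, Real.log_inv, neg_neg, Real.exp_log hpn]
  rw [← hpL] at hcore
  exact prob_le_triangleCount_le_exp hpL hKn hLn hη hη₂ (Nat.le_ceil _) hseed hcore hcount

lemma pow_three_div_six_le_choose_three {s : ℕ} {x : ℝ} (hx : 0 ≤ x) (hs : x + 2 ≤ s) :
    x ^ 3 / 6 ≤ (s.choose 3 : ℝ) := by
  have hs₂ : 2 ≤ s := by exact_mod_cast (le_add_of_nonneg_left hx).trans hs
  calc x ^ 3 / 6 ≤ ((s + 1 - 3 : ℕ) : ℝ) ^ 3 / Nat.factorial 3 := by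
        rw [show s + 1 - 3 = s - 2 by lia, Nat.cast_sub hs₂, Nat.cast_two]
        norm_num
        gcongr
        linarith
    _ ≤ (s.choose 3 : ℝ) := Nat.pow_le_choose 3 s

lemma exp_le_pow_choose_two {s : ℕ} {b K L : ℝ} (hK : 0 < K) (hL : 0 ≤ L)
    (hs : (s / K) ^ 2 / 2 ≤ b) : Real.exp (-(b * (K ^ 2 * L))) ≤ Real.exp (-L) ^ s.choose 2 := by
  have hchoose : (s.choose 2 : ℝ) ≤ b * K ^ 2 := by
    calc (s.choose 2 : ℝ) ≤ (s : ℝ) ^ 2 / Nat.factorial 2 := Nat.choose_le_pow_div 2 s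
      _ = ((s : ℝ) / K) ^ 2 / 2 * K ^ 2 := by field_simp; norm_num
      _ ≤ b * K ^ 2 := by gcongr
  rw [← Real.exp_nat_mul, Real.exp_le_exp, mul_neg, neg_le_neg_iff, ← mul_assoc]
  gcongr

lemma eventually_exp_le_prob_le_triangleCount (hp : Tendsto p atTop (𝓝[>] 0))
    (hK : Tendsto K atTop atTop) (hKn : Tendsto (fun n ↦ K n / n) atTop (𝓝 0)) {b : ℝ}
    (hb : 6 ^ (2 / 3 : ℝ) / 2 < b) :
    ∀ᶠ n in atTop, Real.exp (-(b * (K n ^ 2 * Real.log (1 / p n)))) ≤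
      prob n (p n) {G | K n ^ 3 ≤ triangleCount G} := by
  let s (n : ℕ) : ℕ := ⌈(6 : ℝ) ^ (1 / 3 : ℝ) * K n⌉₊ + 2
  have hs : Tendsto (fun n ↦ s n / K n) atTop (𝓝 (6 ^ (1 / 3 : ℝ))) := by
    have := ((tendsto_nat_ceil_mul_div_atTop (a := (6 : ℝ) ^ (1 / 3 : ℝ)) (by positivity)).comp
      hK).add (hK.const_div_atTop 2)
    simpa [s, Function.comp_def, add_div] using this
  have hsn : ∀ᶠ n in atTop, s n ≤ n := by
    have hlim := hs.mul hKn
    rw [mul_zero] at hlim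
    filter_upwards [hlim.eventually_le_const one_pos, hK.eventually_gt_atTop 0,
      eventually_gt_atTop 0] with n hn hKn hn₀
    rw [div_mul_div_cancel₀ hKn.ne', div_le_one (by positivity)] at hn
    exact_mod_cast hn
  have hsb : ∀ᶠ n in atTop, (s n / K n) ^ 2 / 2 ≤ b := by
    refine ((hs.pow 2).div_const 2).eventually_le_const ?_
    rwa [← Real.rpow_mul_natCast (by norm_num), Nat.cast_two, one_div_mul_eq_div]
  filter_upwards [hsn, hsb, hK.eventually_gt_atTop 0, hp.eventually self_mem_nhdsWithin,
    (tendsto_log_one_div_atTop hp).eventually_ge_atTop 0] with n hsn hsb hKn hp₀ hL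
  have hpL : Real.exp (-Real.log (1 / p n)) = p n := by
    rw [one_div, Real.log_inv, neg_neg, Real.exp_log hp₀]
  have hp₁ : p n ≤ 1 := by rw [← hpL, Real.exp_le_one_iff]; linarith
  have hchoose : K n ^ 3 ≤ (s n).choose 3 := by
    convert pow_three_div_six_le_choose_three (s := s n) (x := (6 : ℝ) ^ (1 / 3 : ℝ) * K n)
      (by positivity) (by simp [s, Nat.le_ceil]) using 1
    rw [mul_pow, ← Real.rpow_mul_natCast (by norm_num)]
    norm_num
  calc _ ≤ p n ^ (s n).choose 2 := by
        simpa only [hpL] using exp_le_pow_choose_two hKn hL hsb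
    _ ≤ _ := pow_choose_two_le_prob (Set.mem_Ioi.1 hp₀).le hp₁ hsn hchoose

lemma tendsto_atTop_of_tendsto_log_div (hK : ∀ᶠ n in atTop, 0 < K n)
    (hlog : Tendsto (fun n : ℕ ↦ Real.log n / K n) atTop (𝓝 0)) : Tendsto K atTop atTop := by
  refine tendsto_atTop_mono' atTop ?_ (Real.tendsto_log_atTop.comp tendsto_natCast_atTop_atTop)
  filter_upwards [hK, hlog.eventually_le_const one_pos] with n hKn hn
  rwa [div_le_one hKn] at hn

lemma exists_lt_upper_rate {a : ℝ} (ha : a < 6 ^ (2 / 3 : ℝ) / 2) :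
    ∃ η : ℝ, 0 < η ∧ η < 1 / 2 ∧ a < (1 - η) * (6 * (1 - 2 * η)) ^ (2 / 3 : ℝ) / 2 - η := by
  have hcont : Continuous fun η : ℝ ↦ (1 - η) * (6 * (1 - 2 * η)) ^ (2 / 3 : ℝ) / 2 - η := by
    fun_prop (disch := norm_num)
  have hnear : ∀ᶠ η in 𝓝[>] (0 : ℝ),
      a < (1 - η) * (6 * (1 - 2 * η)) ^ (2 / 3 : ℝ) / 2 - η :=
    hcont.continuousWithinAt.eventually_const_lt (by simpa using ha)
  obtain ⟨η, hη, hη₂⟩ :=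
    (hnear.and (Ioo_mem_nhdsGT (show (0 : ℝ) < 1 / 2 by norm_num))).exists
  exact ⟨η, hη₂.1, hη₂.2, hη⟩

theorem tendsto_log_prob_pow_three_le_triangleCount (hp : Tendsto p atTop (𝓝[>] 0))
    (hK : Tendsto K atTop atTop) (hlog : Tendsto (fun n : ℕ ↦ Real.log n / K n) atTop (𝓝 0))
    (hKn : Tendsto (fun n ↦ K n / n) atTop (𝓝 0))
    (hpK : Tendsto (fun n ↦ n * p n * Real.log (1 / p n) / K n) atTop (𝓝 0)) :
    Tendsto (fun n ↦ Real.log (prob n (p n) {G | K n ^ 3 ≤ triangleCount G}) /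
      (K n ^ 2 * Real.log (1 / p n))) atTop (𝓝 (-(6 ^ (2 / 3 : ℝ) / 2))) := by
  have hL := tendsto_log_one_div_atTop hp
  refine tendsto_log_div_of_exp_bounds ?_ (fun b hb ↦
    eventually_exp_le_prob_le_triangleCount hp hK hKn hb) fun a ha ↦ ?_
  · filter_upwards [hK.eventually_gt_atTop 0, hL.eventually_gt_atTop 0] with n hKn hLn
    positivity
  · obtain ⟨η, hη, hη₂, haη⟩ := exists_lt_upper_rate ha
    filter_upwards [eventually_prob_le_triangleCount_le_exp hp hK hlog hpK hη hη₂,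
      hL.eventually_ge_atTop 0] with n hn hLn
    refine hn.trans (Real.exp_le_exp.2 (neg_le_neg ?_))
    gcongr

lemma tendsto_const_div_natCast_nhdsGT_zero {l : ℝ} (hl : 0 < l) :
    Tendsto (fun n : ℕ ↦ l / n) atTop (𝓝[>] 0) :=
  tendsto_nhdsWithin_iff.2 ⟨tendsto_const_div_atTop_nhds_zero_nat l,
    (eventually_gt_atTop 0).mono fun _ hn ↦ div_pos hl (Nat.cast_pos.2 hn)⟩

lemma tendsto_mean_degree_mul_log_div {l : ℝ} (hl : 0 < l) (hK : Tendsto K atTop atTop)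
    (hlog : Tendsto (fun n : ℕ ↦ Real.log n / K n) atTop (𝓝 0)) :
    Tendsto (fun n : ℕ ↦ n * (l / n) * Real.log (1 / (l / n)) / K n) atTop (𝓝 0) := by
  have hlim := (hlog.sub (hK.const_div_atTop (Real.log l))).const_mul l
  rw [sub_zero, mul_zero] at hlim
  refine hlim.congr' ?_
  filter_upwards [eventually_gt_atTop 0] with n hn
  have hn₀ : (n : ℝ) ≠ 0 := by positivity
  rw [mul_div_cancel₀ l hn₀, one_div_div, Real.log_div hn₀ hl.ne', ← sub_div, mul_div_assoc]

lemma tendsto_rpow_one_third_div_natCast {k : ℕ → ℝ} (hk : ∀ᶠ n in atTop, 0 ≤ k n)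
    (hkn : Tendsto (fun n : ℕ ↦ k n / (n : ℝ) ^ 3) atTop (𝓝 0)) :
    Tendsto (fun n : ℕ ↦ k n ^ (1 / 3 : ℝ) / n) atTop (𝓝 0) := by
  have hlim := hkn.rpow_const (p := 1 / 3) (.inr (by norm_num))
  rw [Real.zero_rpow (by norm_num)] at hlim
  refine hlim.congr' ?_
  filter_upwards [hk] with n hn
  rw [Real.div_rpow hn (by positivity), ← Real.rpow_natCast_mul (by positivity)]
  norm_num

theorem triangle_tail_limit_general (p k : ℕ → ℝ) (hp : Tendsto p atTop (𝓝[>] 0))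
    (hk : ∀ᶠ n in atTop, 0 < k n)
    (hlog : Tendsto (fun n : ℕ ↦ Real.log n / k n ^ (1 / 3 : ℝ)) atTop (𝓝 0))
    (hkn : Tendsto (fun n : ℕ ↦ k n / (n : ℝ) ^ 3) atTop (𝓝 0))
    (hpk : Tendsto (fun n : ℕ ↦ n * p n * Real.log (1 / p n) / k n ^ (1 / 3 : ℝ)) atTop (𝓝 0)) :
    Tendsto (fun n ↦ Real.log (prob n (p n) {G | k n ≤ triangleCount G}) /
      (k n ^ (2 / 3 : ℝ) * Real.log (1 / p n))) atTop (𝓝 (-(6 ^ (2 / 3 : ℝ)) / 2)) := by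
  have hK : Tendsto (fun n ↦ k n ^ (1 / 3 : ℝ)) atTop atTop :=
    tendsto_atTop_of_tendsto_log_div (hk.mono fun _ hn ↦ Real.rpow_pos_of_pos hn _) hlog
  have hKn := tendsto_rpow_one_third_div_natCast (hk.mono fun _ ↦ le_of_lt) hkn
  rw [neg_div]
  refine (tendsto_log_prob_pow_three_le_triangleCount hp hK hlog hKn hpk).congr' ?_
  filter_upwards [hk] with n hn
  simp only [← Real.rpow_mul_natCast hn.le]
  norm_num

end Asymptotics

/-- **Large deviations for the number of triangles, limit form.**
Fix `λ > 0`, `p_n = λ/n`. If `(log n)/k_n^{1/3} → 0` and `k_n/n³ → 0`, then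
`log P(T ≥ k_n) / (k_n^{2/3} log(1/p_n)) → −6^{2/3}/2`. -/
theorem triangle_tail_limit (l : ℝ) (hl : 0 < l) (k : ℕ → ℝ) (hk : ∀ n, 0 < k n)
    (h1 : Tendsto (fun n : ℕ => Real.log n / (k n) ^ ((1 : ℝ) / 3)) atTop (nhds 0))
    (h2 : Tendsto (fun n : ℕ => k n / (n : ℝ) ^ 3) atTop (nhds 0)) :
    Tendsto (fun n : ℕ =>
        Real.log (prob n (l / n) {G | k n ≤ (triangleCount G : ℝ)}) /
          ((k n) ^ ((2 : ℝ) / 3) * Real.log (1 / (l / n))))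
      atTop (nhds (-(6 ^ ((2 : ℝ) / 3)) / 2)) := by
  have hK := tendsto_atTop_of_tendsto_log_div (.of_forall fun n ↦ Real.rpow_pos_of_pos (hk n) _) h1
  exact triangle_tail_limit_general (fun n ↦ l / n) k (tendsto_const_div_natCast_nhdsGT_zero hl)
    (.of_forall hk) h1 h2 (tendsto_mean_degree_mul_log_div hl hK h1)
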